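/- Under the stated assumptions on U, the coefficient functions, the function D and the constants δ1,…,δ6 (in particular 1/c1 < δ5 − δ4²/δ3), every strong global solution x of the system x'''(t) + β2(t)x''(t) + β1(t)x'(t) + β0(t)U(φ_x(t)) = 0 satisfies: for every x* ∈ Z(U), with y(t) = ‖x(t) − x*‖², one has lim_{t→∞} y'(t) = 0 and lim_{t→∞} y''(t) = 0, and moreover lim_{t→∞} ‖U(x(t))‖ = 0. -/

import Mathlib

open MeasureTheory Filter Topology InnerProductSpace

/-- A function `h : ℝ → H` is locally absolutely continuous on `[t0, ∞)` if on each
interval `[t0, t]` it is the integral of a locally integrable function plus its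
initial value. -/
def LocallyAbsolutelyContinuousFrom {H : Type*} [NormedAddCommGroup H] [NormedSpace ℝ H]
    (t0 : ℝ) (h : ℝ → H) : Prop :=
  ∃ g : ℝ → H, (∀ t, t0 ≤ t → IntervalIntegrable g MeasureTheory.volume t0 t) ∧
    ∀ t, t0 ≤ t → h t = h t0 + ∫ s in t0..t, g s

/-- `x` is a strong global solution of the third-order dynamical system
`x'''(t) + β2(t)x''(t) + β1(t)x'(t) + β0(t) U(x(t) + λ1(t)x'(t) + λ2(t)x''(t)) = 0`
on `[t0, ∞)`. -/
def IsStrongGlobalSolution {H : Type*} [NormedAddCommGroup H] [NormedSpace ℝ H]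
    (t0 : ℝ) (β0 β1 β2 lam1 lam2 : ℝ → ℝ) (U : H → H) (x : ℝ → H) : Prop :=
  LocallyAbsolutelyContinuousFrom t0 x ∧
  LocallyAbsolutelyContinuousFrom t0 (deriv x) ∧
  LocallyAbsolutelyContinuousFrom t0 (deriv (deriv x)) ∧
  ∀ᵐ t ∂(MeasureTheory.volume), t0 ≤ t →
    deriv (deriv (deriv x)) t + β2 t • deriv (deriv x) t + β1 t • deriv x t +
      β0 t • U (x t + lam1 t • deriv x t + lam2 t • deriv (deriv x) t) = 0


lemma lac_continuousOn {H : Type*} [NormedAddCommGroup H] [NormedSpace ℝ H]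
    {t0 : ℝ} {h : ℝ → H} (hh : LocallyAbsolutelyContinuousFrom t0 h) :
    ContinuousOn h (Set.Ioi t0) := by
  obtain ⟨g, hg, hint⟩ := hh
  intro t ht
  have ht' : t0 < t := ht
  have h1 : ContinuousOn (fun u => ∫ s in t0..u, g s) (Set.uIcc t0 (t + 1)) := by
    apply intervalIntegral.continuousOn_primitive_interval'
    · exact hg (t + 1) (by linarith)
    · exact Set.left_mem_uIcc
  rw [Set.uIcc_of_le (by linarith)] at h1
  have hn : Set.Icc t0 (t + 1) ∈ 𝓝 t := Icc_mem_nhds ht' (by linarith)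
  have h2 : ContinuousAt (fun u => h t0 + ∫ s in t0..u, g s) t :=
    (h1.continuousAt hn).const_add _
  refine (h2.congr ?_).continuousWithinAt
  filter_upwards [hn] with u hu
  exact (hint u hu.1).symm

lemma lac_hasDerivAt {H : Type*} [NormedAddCommGroup H] [NormedSpace ℝ H] [CompleteSpace H]
    {t0 : ℝ} {h k : ℝ → H} (hh : LocallyAbsolutelyContinuousFrom t0 h)
    (hk : ContinuousOn k (Set.Ioi t0))
    (hae : ∀ᵐ t ∂(volume : Measure ℝ), t0 ≤ t → deriv h t = k t) :
    ∀ t, t0 < t → HasDerivAt h (k t) t := by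
  obtain ⟨g, hg, hint⟩ := hh
  intro t ht
  have hgi := hg (t + 1) (by linarith)
  have h1 := hgi.ae_hasDerivAt_integral
  have hne : ∀ᵐ s ∂(volume : Measure ℝ), s ≠ t + 1 := by simp [ae_iff, measure_singleton]
  have hgk : ∀ᵐ s ∂(volume : Measure ℝ), s ∈ Set.uIoc t0 (t + 1) → g s = k s := by
    filter_upwards [h1, hae, hne] with s hs1 hs2 hs3 hs
    rw [Set.uIoc_of_le (by linarith)] at hs
    have hs' : s < t + 1 := lt_of_le_of_ne hs.2 hs3
    have h2 := hs1 (by rw [Set.uIcc_of_le (by linarith)]; exact ⟨hs.1.le, hs.2⟩) t0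
      Set.left_mem_uIcc
    have h3 : HasDerivAt h (g s) s := by
      have h4 := h2.const_add (h t0)
      refine h4.congr_of_eventuallyEq ?_
      filter_upwards [Ioi_mem_nhds hs.1] with u hu
      exact hint u (le_of_lt hu)
    rw [← hs2 hs.1.le, h3.deriv]
  have hki : IntervalIntegrable k volume t0 (t + 1) := by
    refine hgi.congr_ae ?_
    exact (ae_restrict_iff' measurableSet_uIoc).2 hgk
  have hkt : IntervalIntegrable k volume t0 t :=
    hki.mono_set (by
      rw [Set.uIcc_of_le ht.le, Set.uIcc_of_le (by linarith)]
      exact Set.Icc_subset_Icc le_rfl (by linarith))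
  have hmeas : StronglyMeasurableAtFilter k (𝓝 t) volume :=
    hk.stronglyMeasurableAtFilter isOpen_Ioi t ht
  have h5 := (intervalIntegral.integral_hasDerivAt_right hkt hmeas
    (hk.continuousAt (Ioi_mem_nhds ht))).const_add (h t0)
  refine h5.congr_of_eventuallyEq ?_
  filter_upwards [Ioo_mem_nhds ht (show t < t + 1 by linarith)] with u hu
  rw [hint u hu.1.le]
  congr 1
  apply intervalIntegral.integral_congr_ae
  filter_upwards [hgk] with s hs hsu
  apply hs
  rw [Set.uIoc_of_le hu.1.le] at hsu
  rw [Set.uIoc_of_le (by linarith)]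
  exact ⟨hsu.1, by linarith [hsu.2, hu.2]⟩

lemma antitone_of_hd {t1 : ℝ} {E E' : ℝ → ℝ} (hE : ∀ t, t1 ≤ t → HasDerivAt E (E' t) t)
    (hE' : ∀ t, t1 ≤ t → E' t ≤ 0) : AntitoneOn E (Set.Ici t1) := by
  apply antitoneOn_of_deriv_nonpos (convex_Ici t1)
  · exact fun t ht => (hE t ht).continuousAt.continuousWithinAt
  · intro t ht
    rw [interior_Ici] at ht
    exact (hE t (le_of_lt ht)).differentiableAt.differentiableWithinAt
  · intro t ht
    rw [interior_Ici] at ht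
    rw [(hE t (le_of_lt ht)).deriv]
    exact hE' t (le_of_lt ht)

lemma barbalat {t1 K κ B : ℝ} {n E E' : ℝ → ℝ} (hκ : 0 < κ) (hn0 : ∀ t, 0 ≤ n t)
    (hn : ∀ s t, t1 ≤ s → t1 ≤ t → |n s - n t| ≤ K * |s - t|)
    (hE : ∀ t, t1 ≤ t → HasDerivAt E (E' t) t)
    (hE' : ∀ t, t1 ≤ t → E' t ≤ -(κ * n t ^ 2))
    (hB : ∀ t, t1 ≤ t → B ≤ E t) : Tendsto n atTop (𝓝 0) := by
  have hanti : AntitoneOn E (Set.Ici t1) := antitone_of_hd hE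
    (fun t ht => (hE' t ht).trans (by have := mul_nonneg hκ.le (sq_nonneg (n t)); linarith))
  rw [Metric.tendsto_atTop]
  intro ε hε
  set η := ε / (2 * (|K| + 1)) with hη
  have hKp : 0 < |K| + 1 := by positivity
  have hηp : 0 < η := by positivity
  set d := κ * (ε / 2) ^ 2 * η with hd
  have hdp : 0 < d := by positivity
  -- infimum
  set I := sInf (E '' Set.Ici t1) with hI
  have hbdd : BddBelow (E '' Set.Ici t1) := ⟨B, by rintro _ ⟨t, ht, rfl⟩; exact hB t ht⟩
  have hnonempty : (E '' Set.Ici t1).Nonempty := ⟨E t1, t1, Set.self_mem_Ici, rfl⟩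
  obtain ⟨_, ⟨T, hT, rfl⟩, hTI⟩ := exists_lt_of_csInf_lt hnonempty
    (show sInf (E '' Set.Ici t1) < I + d by linarith)
  have hT' : t1 ≤ T := hT
  refine ⟨T, fun t ht => ?_⟩
  rw [Real.dist_eq, sub_zero, abs_of_nonneg (hn0 t)]
  by_contra hcon
  push Not at hcon
  have ht1 : t1 ≤ t := hT'.trans ht
  have hlow : ∀ s ∈ Set.Icc t (t + η), E' s ≤ -(κ * (ε / 2) ^ 2) := by
    intro s hs
    have hs1 : t1 ≤ s := ht1.trans hs.1
    have h1 := hn s t hs1 ht1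
    have h2 : |s - t| ≤ η := by rw [abs_of_nonneg (by linarith [hs.1])]; linarith [hs.2]
    have h3 : K * |s - t| ≤ ε / 2 := by
      calc K * |s - t| ≤ (|K| + 1) * |s - t| :=
            mul_le_mul_of_nonneg_right (by linarith [le_abs_self K]) (abs_nonneg _)
        _ ≤ (|K| + 1) * η := mul_le_mul_of_nonneg_left h2 hKp.le
        _ = ε / 2 := by rw [hη]; field_simp
    have h4 : ε / 2 ≤ n s := by have := (abs_le.1 (h1.trans h3)).1; linarith
    have h5 : (ε / 2) ^ 2 ≤ n s ^ 2 := by gcongr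
    have h6 := mul_le_mul_of_nonneg_left h5 hκ.le
    linarith [hE' s hs1]
  have hmv := (convex_Icc t (t + η)).image_sub_le_mul_sub_of_deriv_le (f := E)
    (C := -(κ * (ε / 2) ^ 2))
    (fun s hs => (hE s (ht1.trans hs.1)).continuousAt.continuousWithinAt)
    (fun s hs => (hE s (ht1.trans (interior_subset hs).1)).differentiableAt.differentiableWithinAt)
    (fun s hs => by
      rw [(hE s (ht1.trans (interior_subset hs).1)).deriv]
      exact hlow s (interior_subset hs))
    t (Set.left_mem_Icc.2 (by linarith)) (t + η) (Set.right_mem_Icc.2 (by linarith)) (by linarith)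
  have h7 : E t ≤ E T := hanti hT ht1 ht
  have h8 : I ≤ E (t + η) := csInf_le hbdd ⟨t + η, by show t1 ≤ t + η; linarith, rfl⟩
  have h9 : -(κ * (ε / 2) ^ 2) * (t + η - t) = -d := by rw [hd]; ring
  linarith

/-- choice of the coercivity constant -/
lemma exists_eps {c1 δ3 δ4 δ5 : ℝ} (hc1 : 0 < c1) (hδ3 : 0 < δ3)
    (hkey : 1 / c1 < δ5 - δ4 ^ 2 / δ3) :
    ∃ ε : ℝ, 0 < ε ∧ ε < c1 ∧ ε < δ3 ∧ 1 / (c1 - ε) + δ4 ^ 2 / (δ3 - ε) + ε < δ5 := by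
  have hcont : ContinuousAt (fun ε : ℝ => 1 / (c1 - ε) + δ4 ^ 2 / (δ3 - ε) + ε) 0 := by
    have h1 : c1 - 0 ≠ 0 := by simpa using hc1.ne'
    have h2 : δ3 - 0 ≠ 0 := by simpa using hδ3.ne'
    fun_prop (disch := assumption)
  have h3 : ∀ᶠ ε in 𝓝[>] (0 : ℝ), 1 / (c1 - ε) + δ4 ^ 2 / (δ3 - ε) + ε < δ5 := by
    apply (hcont.tendsto.mono_left nhdsWithin_le_nhds).eventually_lt_const
    simp only [sub_zero, add_zero]; linarith
  have h4 : ∀ᶠ ε in 𝓝[>] (0 : ℝ), ε ∈ Set.Ioo 0 (min c1 δ3) :=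
    Ioo_mem_nhdsGT (lt_min hc1 hδ3)
  obtain ⟨ε, h5, h6⟩ := (h3.and h4).exists
  exact ⟨ε, h6.1, h6.2.trans_le (min_le_left _ _), h6.2.trans_le (min_le_right _ _), h5⟩

lemma quad_lower {c1 δ3 δ4 δ5 ε a b d : ℝ} (h1 : ε < c1) (h2 : ε < δ3)
    (h : 1 / (c1 - ε) + δ4 ^ 2 / (δ3 - ε) + ε < δ5) :
    ε * (a ^ 2 + b ^ 2 + d ^ 2) ≤
      c1 * a ^ 2 - 2 * (a * d) - 2 * δ4 * (b * d) + δ3 * b ^ 2 + δ5 * d ^ 2 := by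
  have e1 : 0 < c1 - ε := by linarith
  have e2 : 0 < δ3 - ε := by linarith
  have f1 : 0 ≤ (c1 - ε) * (a - d / (c1 - ε)) ^ 2 := by positivity
  have f2 : 0 ≤ (δ3 - ε) * (b - δ4 * d / (δ3 - ε)) ^ 2 := by positivity
  have g1 : (c1 - ε) * (a - d / (c1 - ε)) ^ 2 = (c1 - ε) * a ^ 2 - 2 * (a * d)
      + 1 / (c1 - ε) * d ^ 2 := by field_simp; ring
  have g2 : (δ3 - ε) * (b - δ4 * d / (δ3 - ε)) ^ 2 = (δ3 - ε) * b ^ 2 - 2 * δ4 * (b * d)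
      + δ4 ^ 2 / (δ3 - ε) * d ^ 2 := by field_simp; ring
  rw [g1] at f1
  rw [g2] at f2
  have f3 := mul_le_mul_of_nonneg_right h.le (sq_nonneg d)
  nlinarith

/-- nonnegative, nonincreasing, convex -/
def NDC (t0 : ℝ) (f : ℝ → ℝ) : Prop := ∃ f1 f2 : ℝ → ℝ, ∀ t, t0 ≤ t →
  HasDerivAt f (f1 t) t ∧ HasDerivAt f1 (f2 t) t ∧ 0 ≤ f t ∧ f1 t ≤ 0 ∧ 0 ≤ f2 t

lemma NDC.mul {t0 : ℝ} {f g : ℝ → ℝ} (hf : NDC t0 f) (hg : NDC t0 g) :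
    NDC t0 (fun t => f t * g t) := by
  obtain ⟨f1, f2, hf⟩ := hf
  obtain ⟨g1, g2, hg⟩ := hg
  refine ⟨fun t => f1 t * g t + f t * g1 t,
    fun t => (f2 t * g t + f1 t * g1 t) + (f1 t * g1 t + f t * g2 t), fun t ht => ?_⟩
  obtain ⟨a1, a2, a3, a4, a5⟩ := hf t ht
  obtain ⟨b1, b2, b3, b4, b5⟩ := hg t ht
  refine ⟨a1.mul b1, (a2.mul b1).add (a1.mul b2), mul_nonneg a3 b3, ?_, ?_⟩
  · have := mul_nonneg (neg_nonneg.2 a4) b3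
    have := mul_nonneg a3 (neg_nonneg.2 b4)
    linarith
  · have := mul_nonneg a5 b3
    have := mul_nonneg_of_nonpos_of_nonpos a4 b4
    have := mul_nonneg a3 b5
    linarith

lemma NDC.inv {t0 : ℝ} {f : ℝ → ℝ} (hpos : ∀ t, t0 ≤ t → 0 < f t)
    (hd : ∀ t, t0 ≤ t → DifferentiableAt ℝ f t ∧ DifferentiableAt ℝ (deriv f) t)
    (hs : ∀ t, t0 ≤ t → 0 ≤ deriv f t ∧ deriv (deriv f) t ≤ 0) :
    NDC t0 (fun t => (f t)⁻¹) := by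
  refine ⟨fun t => -deriv f t / f t ^ 2,
    fun t => (-deriv (deriv f) t * f t ^ 2 - -deriv f t * (2 * f t * deriv f t)) / (f t ^ 2) ^ 2,
    fun t ht => ?_⟩
  have hp := hpos t ht
  obtain ⟨d1, d2⟩ := hd t ht
  obtain ⟨s1, s2⟩ := hs t ht
  refine ⟨d1.hasDerivAt.inv hp.ne', ?_, by positivity, ?_, ?_⟩
  · refine (d2.hasDerivAt.neg.div (d1.hasDerivAt.pow 2) (pow_ne_zero 2 hp.ne')).congr_deriv ?_
    simp
  · exact div_nonpos_of_nonpos_of_nonneg (by linarith) (by positivity)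
  · apply div_nonneg _ (by positivity)
    have h1 := mul_nonneg (neg_nonneg.2 s2) (sq_nonneg (f t))
    have h2 : 0 ≤ deriv f t * (2 * f t * deriv f t) := by positivity
    linarith

lemma core_ineq {H : Type*} [NormedAddCommGroup H] [InnerProductSpace ℝ H]
    {X v w z u : H} {b0 b1 b2 l1 l2 d ω : ℝ} (hb0 : 0 < b0) (hd : 0 < d)
    (hz : z + b2 • w + b1 • v + b0 • u = 0)
    (hq : ω * ‖u‖ ^ 2 ≤ ⟪u, X + l1 • v + l2 • w⟫_ℝ) :
    (2 * ω - d) / b0 * (‖z‖ ^ 2 + b2 ^ 2 * ‖w‖ ^ 2 + b1 ^ 2 * ‖v‖ ^ 2 + 2 * b2 * ⟪z, w⟫_ℝ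
      + 2 * b1 * ⟪z, v⟫_ℝ + 2 * b1 * b2 * ⟪v, w⟫_ℝ) ≤
    -2 * (⟪z, X⟫_ℝ + b2 * ⟪w, X⟫_ℝ + b1 * ⟪v, X⟫_ℝ)
      + b0 / d * (l1 ^ 2 * ‖v‖ ^ 2 + 2 * (l1 * l2) * ⟪v, w⟫_ℝ + l2 ^ 2 * ‖w‖ ^ 2) := by
  have hu : b0 • u = -(z + b2 • w + b1 • v) := by
    rw [eq_neg_iff_add_eq_zero, add_comm]; exact hz
  have e1 : b0 ^ 2 * ‖u‖ ^ 2 = ‖z‖ ^ 2 + b2 ^ 2 * ‖w‖ ^ 2 + b1 ^ 2 * ‖v‖ ^ 2 + 2 * b2 * ⟪z, w⟫_ℝ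
      + 2 * b1 * ⟪z, v⟫_ℝ + 2 * b1 * b2 * ⟪v, w⟫_ℝ := by
    have h := congrArg (fun y : H => ⟪y, y⟫_ℝ) hu
    simp only [inner_neg_neg, inner_add_left, inner_add_right, real_inner_smul_left,
      real_inner_smul_right, real_inner_self_eq_norm_sq, norm_smul, mul_pow, Real.norm_eq_abs, sq_abs] at h
    rw [real_inner_comm z w, real_inner_comm z v, real_inner_comm w v] at *
    linarith
  have e2 : b0 * ⟪u, X⟫_ℝ = -(⟪z, X⟫_ℝ + b2 * ⟪w, X⟫_ℝ + b1 * ⟪v, X⟫_ℝ) := by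
    have h := congrArg (fun y : H => ⟪y, X⟫_ℝ) hu
    simp only [inner_neg_left, inner_add_left, real_inner_smul_left] at h
    linarith
  set s := l1 • v + l2 • w with hs
  have e3 : ‖s‖ ^ 2 = l1 ^ 2 * ‖v‖ ^ 2 + 2 * (l1 * l2) * ⟪v, w⟫_ℝ + l2 ^ 2 * ‖w‖ ^ 2 := by
    rw [← real_inner_self_eq_norm_sq, hs]
    simp only [inner_add_left, inner_add_right, real_inner_smul_left,
      real_inner_smul_right, real_inner_self_eq_norm_sq, norm_smul, mul_pow, Real.norm_eq_abs, sq_abs]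
    rw [real_inner_comm v w]
    ring
  have e4 : 2 * d * ⟪u, s⟫_ℝ ≤ d ^ 2 * ‖u‖ ^ 2 + ‖s‖ ^ 2 := by
    have h : 0 ≤ ‖d • u - s‖ ^ 2 := by positivity
    rw [@norm_sub_sq_real, norm_smul, real_inner_smul_left, mul_pow, Real.norm_eq_abs, sq_abs] at h
    linarith
  have e5 : ⟪u, X + l1 • v + l2 • w⟫_ℝ = ⟪u, X⟫_ℝ + ⟪u, s⟫_ℝ := by
    rw [add_assoc, inner_add_right]
  rw [e5] at hq
  rw [← e1, ← e3]
  have e6 : (2 * ω - d) / b0 * (b0 ^ 2 * ‖u‖ ^ 2) = (2 * ω - d) * b0 * ‖u‖ ^ 2 := by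
    field_simp
  rw [e6]
  have e7 : 2 * ⟪u, s⟫_ℝ ≤ d * ‖u‖ ^ 2 + ‖s‖ ^ 2 / d := by
    have : d * ‖u‖ ^ 2 + ‖s‖ ^ 2 / d = (d ^ 2 * ‖u‖ ^ 2 + ‖s‖ ^ 2) / d := by field_simp
    rw [this, le_div_iff₀ hd]; linarith
  have e8 : b0 * ((2 * ω - d) * ‖u‖ ^ 2) ≤ b0 * (2 * ⟪u, X⟫_ℝ + ‖s‖ ^ 2 / d) :=
    mul_le_mul_of_nonneg_left (by linarith) hb0.le
  have e9 : b0 * (2 * ⟪u, X⟫_ℝ + ‖s‖ ^ 2 / d) = 2 * (b0 * ⟪u, X⟫_ℝ) + b0 / d * ‖s‖ ^ 2 := by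
    ring
  rw [e9, e2] at e8
  linarith

/-- the energy estimate -/
lemma energy {H : Type*} [NormedAddCommGroup H] [InnerProductSpace ℝ H]
    {t1 : ℝ} {X v w z : ℝ → H}
    (hX : ∀ t, t1 ≤ t → HasDerivAt X (v t) t)
    (hv : ∀ t, t1 ≤ t → HasDerivAt v (w t) t)
    (hw : ∀ t, t1 ≤ t → HasDerivAt w (z t) t)
    {b2 b2d b2dd b1 b1d a2 a2d a2dd a1 a1d e1 e1d : ℝ → ℝ}
    (hb2 : ∀ t, t1 ≤ t → HasDerivAt b2 (b2d t) t ∧ HasDerivAt b2d (b2dd t) t ∧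
      0 ≤ b2 t ∧ b2d t ≤ 0 ∧ 0 ≤ b2dd t)
    (hb1 : ∀ t, t1 ≤ t → HasDerivAt b1 (b1d t) t ∧ b1d t ≤ 0)
    (ha2 : ∀ t, t1 ≤ t → HasDerivAt a2 (a2d t) t ∧ HasDerivAt a2d (a2dd t) t ∧
      0 ≤ a2 t ∧ a2d t ≤ 0 ∧ 0 ≤ a2dd t)
    (ha1 : ∀ t, t1 ≤ t → HasDerivAt a1 (a1d t) t ∧ a1d t ≤ 0)
    (he1 : ∀ t, t1 ≤ t → HasDerivAt e1 (e1d t) t ∧ e1d t ≤ 0)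
    {δ1 δ2 δ3 δ4 δ5 δ6 c1 B2 ε : ℝ}
    (hmain : ∀ t, t1 ≤ t →
      2 * ⟪z t, X t⟫_ℝ + 6 * ⟪v t, w t⟫_ℝ + b2 t * (2 * ⟪w t, X t⟫_ℝ + 2 * ‖v t‖ ^ 2)
      + b1 t * (2 * ⟪v t, X t⟫_ℝ) + a2 t * (2 * ⟪z t, v t⟫_ℝ + 2 * ‖w t‖ ^ 2)
      + a1 t * (2 * ⟪v t, w t⟫_ℝ) + e1 t * (2 * ⟪z t, w t⟫_ℝ)
      ≤ -(δ1 * ‖v t‖ ^ 2 + δ2 * ‖w t‖ ^ 2 + δ6 * ‖z t‖ ^ 2))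
    (hδ1 : 0 < δ1) (hδ2 : 0 < δ2) (hδ6 : 0 < δ6)
    (hc1 : ∀ t, t1 ≤ t → c1 ≤ b1 t) (h3 : ∀ t, t1 ≤ t → δ3 ≤ a1 t + 2)
    (h4 : ∀ t, t1 ≤ t → a2 t ≤ δ4) (h5 : ∀ t, t1 ≤ t → δ5 ≤ e1 t)
    (hb2pos : ∀ t, t1 ≤ t → 0 < b2 t)
    (hB2 : ∀ t, t1 ≤ t → b2 t ≤ B2)
    (hε : 0 < ε) (hε1 : ε < c1) (hε3 : ε < δ3)
    (hεk : 1 / (c1 - ε) + δ4 ^ 2 / (δ3 - ε) + ε < δ5) :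
    ∃ (E E' : ℝ → ℝ) (B M : ℝ), (∀ t, t1 ≤ t → HasDerivAt E (E' t) t) ∧
      (∀ t, t1 ≤ t → E' t ≤ -(δ1 * ‖v t‖ ^ 2 + δ2 * ‖w t‖ ^ 2 + δ6 * ‖z t‖ ^ 2)) ∧
      (∀ t, t1 ≤ t → B ≤ E t) ∧
      (∀ t, t1 ≤ t → ‖X t‖ ≤ M ∧ ‖v t‖ ≤ M ∧ ‖w t‖ ≤ M) := by
  set E : ℝ → ℝ := fun t => 2 * ⟪w t, X t⟫_ℝ + 2 * ⟪v t, v t⟫_ℝ + b2 t * (2 * ⟪v t, X t⟫_ℝ)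
    - b2d t * ⟪X t, X t⟫_ℝ + b1 t * ⟪X t, X t⟫_ℝ + a2 t * (2 * ⟪v t, w t⟫_ℝ)
    - a2d t * ⟪v t, v t⟫_ℝ + a1 t * ⟪v t, v t⟫_ℝ + e1 t * ⟪w t, w t⟫_ℝ with hEdef
  have hder : ∀ t, t1 ≤ t → ∃ e', HasDerivAt E e' t ∧
      e' ≤ -(δ1 * ‖v t‖ ^ 2 + δ2 * ‖w t‖ ^ 2 + δ6 * ‖z t‖ ^ 2) := by
    intro t ht
    have dX := hX t ht
    have dv := hv t ht
    have dw := hw t ht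
    obtain ⟨p1, p2, p3, p4, p5⟩ := hb2 t ht
    obtain ⟨q1, q2⟩ := hb1 t ht
    obtain ⟨r1, r2, r3, r4, r5⟩ := ha2 t ht
    obtain ⟨s1, s2⟩ := ha1 t ht
    obtain ⟨u1, u2⟩ := he1 t ht
    have hd := (((((((((dw.inner ℝ dX).const_mul 2).add ((dv.inner ℝ dv).const_mul 2)).add
      (p1.mul ((dv.inner ℝ dX).const_mul 2))).sub (p2.mul (dX.inner ℝ dX))).add
      (q1.mul (dX.inner ℝ dX))).add (r1.mul ((dv.inner ℝ dw).const_mul 2))).sub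
      (r2.mul (dv.inner ℝ dv))).add (s1.mul (dv.inner ℝ dv))).add (u1.mul (dw.inner ℝ dw))
    refine ⟨_, hd, ?_⟩
    have hm := hmain t ht
    have n1 := mul_nonneg p5 (sq_nonneg ‖X t‖)
    have n2 := mul_nonneg (neg_nonneg.2 q2) (sq_nonneg ‖X t‖)
    have n3 := mul_nonneg r5 (sq_nonneg ‖v t‖)
    have n4 := mul_nonneg (neg_nonneg.2 s2) (sq_nonneg ‖v t‖)
    have n5 := mul_nonneg (neg_nonneg.2 u2) (sq_nonneg ‖w t‖)
    rw [real_inner_comm (v t) (X t), real_inner_comm (w t) (v t)] at *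
    simp only [real_inner_comm (z t) (w t), real_inner_comm (z t) (v t), real_inner_self_eq_norm_sq] at *
    linarith
  have hlow : ∀ t, t1 ≤ t →
      b2 t * (2 * ⟪v t, X t⟫_ℝ) + ε * (‖X t‖ ^ 2 + ‖v t‖ ^ 2 + ‖w t‖ ^ 2) ≤ E t := by
    intro t ht
    have hq := quad_lower (a := ‖X t‖) (b := ‖v t‖) (d := ‖w t‖) hε1 hε3 hεk
    obtain ⟨-, -, p3, p4, p5⟩ := hb2 t ht
    obtain ⟨-, -, r3, r4, r5⟩ := ha2 t ht
    have i1 := neg_le_of_abs_le (abs_real_inner_le_norm (w t) (X t))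
    have i2 := neg_le_of_abs_le (abs_real_inner_le_norm (v t) (w t))
    have m1 := mul_nonneg (sub_nonneg.2 (hc1 t ht)) (sq_nonneg ‖X t‖)
    have m2 := mul_nonneg (sub_nonneg.2 (h3 t ht)) (sq_nonneg ‖v t‖)
    have m3 := mul_nonneg (sub_nonneg.2 (h5 t ht)) (sq_nonneg ‖w t‖)
    have m4 := mul_nonneg (neg_nonneg.2 p4) (sq_nonneg ‖X t‖)
    have m5 := mul_nonneg (neg_nonneg.2 r4) (sq_nonneg ‖v t‖)
    have m6 := mul_nonneg (sub_nonneg.2 (h4 t ht)) (mul_nonneg (norm_nonneg (v t)) (norm_nonneg (w t)))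
    have m7 := mul_le_mul_of_nonneg_left i2 r3
    simp only [hEdef, real_inner_self_eq_norm_sq]
    linarith
  choose! E' hE' hE'le using hder
  have hanti := antitone_of_hd hE' (fun t ht => (hE'le t ht).trans (by
    have : 0 ≤ δ1 * ‖v t‖ ^ 2 + δ2 * ‖w t‖ ^ 2 + δ6 * ‖z t‖ ^ 2 := by positivity
    linarith))
  set M0 := E t1 with hM0
  have hEM : ∀ t, t1 ≤ t → E t ≤ M0 := fun t ht => hanti (Set.self_mem_Ici) ht ht
  set Y := ‖X t1‖ ^ 2 + |M0| / ε + 1 with hY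
  have hYpos : 0 < Y := by positivity
  have hXY : ∀ t, t1 ≤ t → ‖X t‖ ^ 2 ≤ Y := by
    intro T hT
    have dy : ∀ t, t1 ≤ t → HasDerivAt (fun t => ‖X t‖ ^ 2) (2 * ⟪X t, v t⟫_ℝ) t :=
      fun t ht => (hX t ht).norm_sq
    refine image_le_of_deriv_right_lt_deriv_boundary (f := fun t => ‖X t‖ ^ 2)
      (f' := fun t => 2 * ⟪X t, v t⟫_ℝ) (a := t1) (b := T) (B := fun _ => Y) (B' := fun _ => 0)
      ?_ ?_ ?_ ?_ ?_ (Set.right_mem_Icc.2 hT)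
    · exact fun t ht => (dy t ht.1).continuousAt.continuousWithinAt
    · exact fun t ht => (dy t ht.1).hasDerivWithinAt
    · have : 0 ≤ |M0| / ε := by positivity
      simp only [hY]; linarith
    · exact fun t => hasDerivAt_const t Y
    · intro t ht heq
      have heq : ‖X t‖ ^ 2 = Y := heq
      show 2 * ⟪X t, v t⟫_ℝ < 0
      have l1 := hlow t ht.1
      have l2 := hEM t ht.1
      rw [heq] at l1
      have l3 : |M0| < ε * Y := by
        have : ε * Y = ε * ‖X t1‖ ^ 2 + |M0| + ε := by rw [hY]; field_simp
        have : 0 ≤ ε * ‖X t1‖ ^ 2 := by positivity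
        linarith
      have l4 : 0 ≤ ε * ‖v t‖ ^ 2 := by positivity
      have l5 : 0 ≤ ε * ‖w t‖ ^ 2 := by positivity
      have l6 : b2 t * (2 * ⟪v t, X t⟫_ℝ) < 0 := by linarith [le_abs_self M0]
      rw [real_inner_comm]
      by_contra hc
      push Not at hc
      exact absurd (mul_nonneg (hb2pos t ht.1).le hc) (not_le.2 l6)
  have hcross : ∀ t, t1 ≤ t → -(ε / 2 * ‖v t‖ ^ 2 + 2 / ε * (B2 ^ 2 * Y)) ≤
      b2 t * (2 * ⟪v t, X t⟫_ℝ) := by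
    intro t ht
    have i1 := neg_le_of_abs_le (abs_real_inner_le_norm (v t) (X t))
    have hb := hb2pos t ht
    have j1 := mul_le_mul_of_nonneg_left i1 hb.le
    have j2 : b2 t ^ 2 * ‖X t‖ ^ 2 ≤ B2 ^ 2 * Y :=
      mul_le_mul (by have := hB2 t ht; gcongr) (hXY t ht) (sq_nonneg _) (sq_nonneg _)
    have j3 : 0 ≤ ε / 2 * (‖v t‖ - 2 / ε * (b2 t * ‖X t‖)) ^ 2 := by positivity
    have j4 : ε / 2 * (‖v t‖ - 2 / ε * (b2 t * ‖X t‖)) ^ 2 = ε / 2 * ‖v t‖ ^ 2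
      - 2 * b2 t * (‖v t‖ * ‖X t‖) + 2 / ε * (b2 t ^ 2 * ‖X t‖ ^ 2) := by field_simp; ring
    have j5 : 2 / ε * (b2 t ^ 2 * ‖X t‖ ^ 2) ≤ 2 / ε * (B2 ^ 2 * Y) :=
      mul_le_mul_of_nonneg_left j2 (by positivity)
    linarith
  set R := 2 / ε * (B2 ^ 2 * Y) with hR
  have hR0 : 0 ≤ R := by positivity
  set Q := (|M0| + R) / (ε / 2) with hQ
  have hQ0 : 0 ≤ Q := by positivity
  have hvw : ∀ t, t1 ≤ t → ‖v t‖ ^ 2 + ‖w t‖ ^ 2 ≤ Q := by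
    intro t ht
    rw [hQ, le_div_iff₀ (by positivity)]
    have k1 := hlow t ht
    have k2 := hEM t ht
    have k3 := hcross t ht
    have k4 : 0 ≤ ε * ‖X t‖ ^ 2 := by positivity
    have k5 : 0 ≤ ε * ‖w t‖ ^ 2 := by positivity
    linarith [le_abs_self M0]
  have hsq : ∀ a b : ℝ, a ^ 2 ≤ b → a ≤ b + 1 := fun a b h => by nlinarith [sq_nonneg (a - 1)]
  refine ⟨E, E', -R, Y + Q + 1, hE', hE'le, ?_, ?_⟩
  · intro t ht
    have k1 := hlow t ht
    have k3 := hcross t ht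
    have k4 : 0 ≤ ε * ‖X t‖ ^ 2 := by positivity
    have k5 : 0 ≤ ε * ‖w t‖ ^ 2 := by positivity
    have k6 : 0 ≤ ε * ‖v t‖ ^ 2 := by positivity
    linarith
  · intro t ht
    have k := hvw t ht
    refine ⟨?_, ?_, ?_⟩
    · have := hsq _ _ (hXY t ht); linarith
    · have := hsq ‖v t‖ Q (by linarith [sq_nonneg ‖w t‖]); linarith
    · have := hsq ‖w t‖ Q (by linarith [sq_nonneg ‖v t‖]); linarith

set_option maxHeartbeats 2000000 in
theorem stmt4
    {H : Type*} [NormedAddCommGroup H] [InnerProductSpace ℝ H] [CompleteSpace H]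
    (U : H → H) (ωu Lu t0 : ℝ) (hωu : 0 < ωu) (hLu : 0 < Lu) (ht0 : 0 ≤ t0)
    (hquasi : ∀ x xs : H, U xs = 0 → ωu * ‖U x‖ ^ 2 ≤ ⟪U x, x - xs⟫_ℝ)
    (hLip : ∀ x y : H, ‖U x - U y‖ ≤ Lu * ‖x - y‖)
    (hZ : ∃ z : H, U z = 0)
    (β0 β1 β2 lam1 lam2 D : ℝ → ℝ)
    (hβ0pos : ∀ t, t0 ≤ t → 0 < β0 t)
    (hβ1pos : ∀ t, t0 ≤ t → 0 < β1 t)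
    (hβ2pos : ∀ t, t0 ≤ t → 0 < β2 t)
    (hβ0d : ∀ t, t0 ≤ t → DifferentiableAt ℝ β0 t ∧ DifferentiableAt ℝ (deriv β0) t)
    (hβ1d : ∀ t, t0 ≤ t → DifferentiableAt ℝ β1 t ∧ DifferentiableAt ℝ (deriv β1) t)
    (hβ2d : ∀ t, t0 ≤ t → DifferentiableAt ℝ β2 t ∧ DifferentiableAt ℝ (deriv β2) t)
    (hβ2sign : ∀ t, t0 ≤ t → deriv β2 t ≤ 0 ∧ 0 ≤ deriv (deriv β2) t)
    (hβ1sign : ∀ t, t0 ≤ t → deriv β1 t ≤ 0 ∧ 0 ≤ deriv (deriv β1) t)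
    (hβ0sign : ∀ t, t0 ≤ t → 0 ≤ deriv β0 t ∧ deriv (deriv β0) t ≤ 0)
    (hlam1nn : ∀ t, t0 ≤ t → 0 ≤ lam1 t)
    (hlam2nn : ∀ t, t0 ≤ t → 0 ≤ lam2 t)
    (hlam1d : ∀ t, t0 ≤ t → DifferentiableAt ℝ lam1 t ∧ 0 ≤ deriv lam1 t)
    (hlam2d : ∀ t, t0 ≤ t → DifferentiableAt ℝ lam2 t ∧ 0 ≤ deriv lam2 t)
    (hDpos : ∀ t, t0 ≤ t → 0 < D t)
    (hDd : ∀ t, t0 ≤ t → DifferentiableAt ℝ D t ∧ DifferentiableAt ℝ (deriv D) t)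
    (hDsup : ∃ Dbar : ℝ, (∀ t, t0 ≤ t → D t ≤ Dbar) ∧ Dbar < 2 * ωu)
    (hDlow : ∀ t, t0 ≤ t → β0 t ^ 2 * lam1 t * lam2 t / (β1 t * β2 t) ≤ D t ^ 2)
    (hDsign : ∀ t, t0 ≤ t → 0 ≤ deriv D t ∧ deriv (deriv D) t ≤ 0)
    (δ1 δ2 δ3 δ4 δ5 δ6 c1 : ℝ)
    (hδ1 : 0 < δ1) (hδ2 : 0 < δ2) (hδ3 : 0 < δ3)
    (hδ4 : 0 < δ4) (hδ5 : 0 < δ5) (hδ6 : 0 < δ6)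
    (hc1 : IsGLB (β1 '' Set.Ici t0) c1)
    (hA0 : ∀ t, t0 ≤ t →
      δ1 ≤ (2 * ωu - D t) * β1 t ^ 2 / β0 t - β0 t / D t * lam1 t ^ 2 - 2 * β2 t)
    (hB0 : ∀ t, t0 ≤ t →
      δ2 ≤ (2 * ωu - D t) / β0 t * (β2 t ^ 2 - 2 * β1 t) - β0 t / D t * lam2 t ^ 2)
    (hA1 : ∀ t, t0 ≤ t →
      δ3 ≤ ((2 * ωu - D t) * β1 t * β2 t / β0 t - β0 t / D t * (lam1 t * lam2 t) - 3) + 2)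
    (hA2 : ∀ t, t0 ≤ t → (2 * ωu - D t) * β1 t / β0 t ≤ δ4)
    (hB1 : ∀ t, t0 ≤ t → δ5 ≤ (2 * ωu - D t) * β2 t / β0 t)
    (hC0 : ∀ t, t0 ≤ t → δ6 ≤ (2 * ωu - D t) / β0 t)
    (hkey : 1 / c1 < δ5 - δ4 ^ 2 / δ3)
    (x : ℝ → H) (hx : IsStrongGlobalSolution t0 β0 β1 β2 lam1 lam2 U x) :
    (∀ xs : H, U xs = 0 →
      Tendsto (deriv (fun t => ‖x t - xs‖ ^ 2)) atTop (𝓝 0) ∧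
      Tendsto (deriv (deriv (fun t => ‖x t - xs‖ ^ 2))) atTop (𝓝 0)) ∧
    Tendsto (fun t => ‖U (x t)‖) atTop (𝓝 0) := by
  obtain ⟨hx0, hx1, hx2, hode⟩ := hx
  -- regularity of the trajectory
  set v := deriv x with hvdef
  set w := deriv v with hwdef
  set φ : ℝ → H := fun t => x t + lam1 t • v t + lam2 t • w t with hφ
  set z : ℝ → H := fun t => -(β2 t • w t + β1 t • v t + β0 t • U (φ t)) with hzdef
  have cx := lac_continuousOn hx0
  have cv := lac_continuousOn hx1
  have cw := lac_continuousOn hx2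
  have hUc : Continuous U :=
    (LipschitzWith.of_dist_le_mul (K := ⟨Lu, hLu.le⟩) (fun a b => by
      rw [dist_eq_norm, dist_eq_norm]; exact hLip a b)).continuous
  have cof : ∀ f : ℝ → ℝ, (∀ t, t0 ≤ t → DifferentiableAt ℝ f t) →
      ContinuousOn f (Set.Ioi t0) := fun f hf t ht =>
    (hf t (le_of_lt ht)).continuousAt.continuousWithinAt
  have cz : ContinuousOn z (Set.Ioi t0) := by
    have k0 := cof β0 (fun t ht => (hβ0d t ht).1)
    have k1 := cof β1 (fun t ht => (hβ1d t ht).1)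
    have k2 := cof β2 (fun t ht => (hβ2d t ht).1)
    have k3 := cof lam1 (fun t ht => (hlam1d t ht).1)
    have k4 := cof lam2 (fun t ht => (hlam2d t ht).1)
    have kφ : ContinuousOn φ (Set.Ioi t0) := (cx.add (k3.smul cv)).add (k4.smul cw)
    exact (((k2.smul cw).add (k1.smul cv)).add (k0.smul (hUc.comp_continuousOn kφ))).neg
  have dx : ∀ t, t0 < t → HasDerivAt x (v t) t :=
    lac_hasDerivAt hx0 cv (Eventually.of_forall fun t _ => rfl)
  have dv : ∀ t, t0 < t → HasDerivAt v (w t) t :=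
    lac_hasDerivAt hx1 cw (Eventually.of_forall fun t _ => rfl)
  have dw : ∀ t, t0 < t → HasDerivAt w (z t) t := by
    refine lac_hasDerivAt hx2 cz ?_
    filter_upwards [hode] with t ht ht0
    have h := ht ht0
    simp only [hzdef, hφ]
    rw [eq_neg_iff_add_eq_zero, ← h]
    abel
  have hzeq : ∀ t, z t + β2 t • w t + β1 t • v t + β0 t • U (φ t) = 0 := by
    intro t
    simp only [hzdef]
    abel
  -- coefficients
  obtain ⟨Dbar, hDb, hDb2⟩ := hDsup
  have hD2 : ∀ t, t0 ≤ t → 0 < 2 * ωu - D t := fun t ht => by linarith [hDb t ht]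
  have ndc_num : NDC t0 (fun t => 2 * ωu - D t) := by
    refine ⟨fun t => -deriv D t, fun t => -deriv (deriv D) t, fun t ht => ?_⟩
    refine ⟨(hDd t ht).1.hasDerivAt.const_sub _, (hDd t ht).2.hasDerivAt.neg, (hD2 t ht).le, ?_, ?_⟩
    · linarith [(hDsign t ht).1]
    · linarith [(hDsign t ht).2]
  have ndc_c : NDC t0 (fun t => (2 * ωu - D t) * (β0 t)⁻¹) := ndc_num.mul (NDC.inv hβ0pos hβ0d hβ0sign)
  have ndc_b1 : NDC t0 β1 := ⟨deriv β1, deriv (deriv β1), fun t ht =>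
    ⟨(hβ1d t ht).1.hasDerivAt, (hβ1d t ht).2.hasDerivAt, (hβ1pos t ht).le, hβ1sign t ht⟩⟩
  have ndc_b2 : NDC t0 β2 := ⟨deriv β2, deriv (deriv β2), fun t ht =>
    ⟨(hβ2d t ht).1.hasDerivAt, (hβ2d t ht).2.hasDerivAt, (hβ2pos t ht).le, hβ2sign t ht⟩⟩
  have mono : ∀ f, NDC t0 f → ∀ t, t0 ≤ t → f t ≤ f t0 := by
    rintro f ⟨f1, f2, hf⟩ t ht
    exact antitone_of_hd (fun s hs => (hf s hs).1) (fun s hs => (hf s hs).2.2.2.1)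
      Set.self_mem_Ici ht ht
  set c : ℝ → ℝ := fun t => (2 * ωu - D t) * (β0 t)⁻¹ with hc
  obtain ⟨a2d, a2dd, ha2⟩ := ndc_c.mul ndc_b1
  obtain ⟨e1d, e1dd, he1⟩ := ndc_c.mul ndc_b2
  set C := c t0 with hC
  have hcC : ∀ t, t0 ≤ t → c t ≤ C := mono c ndc_c
  have hcpos : ∀ t, t0 ≤ t → 0 < c t := fun t ht => mul_pos (hD2 t ht) (inv_pos.2 (hβ0pos t ht))
  have hCpos : 0 < C := hcpos t0 le_rfl
  have hb1le : ∀ t, t0 ≤ t → β1 t ≤ β1 t0 := mono β1 ndc_b1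
  have hb2le : ∀ t, t0 ≤ t → β2 t ≤ β2 t0 := mono β2 ndc_b2
  have hb0le : ∀ t, t0 ≤ t → β0 t0 ≤ β0 t := by
    intro t ht
    have := antitone_of_hd (fun s hs => (hβ0d s hs).1.hasDerivAt.neg)
      (fun s hs => by linarith [(hβ0sign s hs).1]) Set.self_mem_Ici ht ht
    simpa using this
  -- the coefficient `A1` is nonincreasing
  set a1 : ℝ → ℝ := fun t =>
    (2 * ωu - D t) * (β1 t * β2 t) / β0 t - β0 t * (lam1 t * lam2 t) / D t - 3 with ha1def
  have ha1 : ∀ t, t0 ≤ t → ∃ a', HasDerivAt a1 a' t ∧ a' ≤ 0 := by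
    intro t ht
    have p0 := hβ0pos t ht
    have p1 := hβ1pos t ht
    have p2 := hβ2pos t ht
    have pD := hDpos t ht
    have q1 := hlam1nn t ht
    have q2 := hlam2nn t ht
    have d0 := (hβ0d t ht).1.hasDerivAt
    have d1 := (hβ1d t ht).1.hasDerivAt
    have d2 := (hβ2d t ht).1.hasDerivAt
    have e1 := (hlam1d t ht).1.hasDerivAt
    have e2 := (hlam2d t ht).1.hasDerivAt
    have dD := (hDd t ht).1.hasDerivAt
    have hd := ((((dD.const_sub (2 * ωu)).mul (d1.mul d2)).div d0 p0.ne').sub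
      ((d0.mul (e1.mul e2)).div dD pD.ne')).sub_const 3
    refine ⟨_, hd, ?_⟩
    simp only [Pi.mul_apply]
    set K := β1 t * β2 t with hK
    set Λ := lam1 t * lam2 t with hΛ
    set K' := deriv β1 t * β2 t + β1 t * deriv β2 t with hK'
    set Λ' := deriv lam1 t * lam2 t + lam1 t * deriv lam2 t with hΛ'
    have hKp : 0 < K := by positivity
    have hΛ0 : 0 ≤ Λ := by positivity
    have hK'0 : K' ≤ 0 := by
      have := mul_nonneg (neg_nonneg.2 (hβ1sign t ht).1) p2.le
      have := mul_nonneg p1.le (neg_nonneg.2 (hβ2sign t ht).1)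
      linarith
    have hΛ'0 : 0 ≤ Λ' := by
      have := mul_nonneg (hlam1d t ht).2 q2
      have := mul_nonneg q1 (hlam2d t ht).2
      linarith
    have hlow : β0 t ^ 2 * Λ ≤ D t ^ 2 * K := by
      have h := hDlow t ht
      rw [div_le_iff₀ hKp] at h
      rw [hΛ]; linarith
    have hD'0 := (hDsign t ht).1
    have hb'0 := (hβ0sign t ht).1
    have hDD := hD2 t ht
    have g : (((-deriv D t) * K + (2 * ωu - D t) * K') * β0 t - (2 * ωu - D t) * K * deriv β0 t)
        / β0 t ^ 2 - ((deriv β0 t * Λ + β0 t * Λ') * D t - β0 t * Λ * deriv D t) / D t ^ 2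
        = -(deriv D t * (D t ^ 2 * K - β0 t ^ 2 * Λ) / (β0 t * D t ^ 2)
          + (2 * ωu - D t) * (-K') / β0 t + (2 * ωu - D t) * K * deriv β0 t / β0 t ^ 2
          + deriv β0 t * Λ / D t + β0 t * Λ' / D t) := by
      field_simp
      ring
    rw [g]
    have t1 : 0 ≤ deriv D t * (D t ^ 2 * K - β0 t ^ 2 * Λ) / (β0 t * D t ^ 2) :=
      div_nonneg (mul_nonneg hD'0 (by linarith)) (by positivity)
    have t2 : 0 ≤ (2 * ωu - D t) * (-K') / β0 t :=
      div_nonneg (mul_nonneg hDD.le (by linarith)) p0.le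
    have t3 : 0 ≤ (2 * ωu - D t) * K * deriv β0 t / β0 t ^ 2 := by positivity
    have t4 : 0 ≤ deriv β0 t * Λ / D t := by positivity
    have t5 : 0 ≤ β0 t * Λ' / D t := by positivity
    linarith
  choose! a1d ha1' using ha1
  have hDle : ∀ t, t0 ≤ t → D t ≤ 2 * ωu := fun t ht => by linarith [hD2 t ht]
  have hcb1 : ∀ t, t0 ≤ t → δ1 + β0 t / D t * lam1 t ^ 2 + 2 * β2 t ≤ c t * β1 t ^ 2 := by
    intro t ht
    have h := hA0 t ht
    have : c t * β1 t ^ 2 = (2 * ωu - D t) * β1 t ^ 2 / β0 t := by simp only [hc]; ring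
    linarith
  have hc1pos : 0 < c1 := by
    have hlb : Real.sqrt (δ1 / C) ≤ c1 := by
      apply hc1.2
      rintro _ ⟨t, ht, rfl⟩
      apply Real.sqrt_le_iff.2 ⟨(hβ1pos t ht).le, ?_⟩
      rw [div_le_iff₀ hCpos]
      have h1 := hcb1 t ht
      have h2 : 0 ≤ β0 t / D t * lam1 t ^ 2 :=
        mul_nonneg (div_nonneg (hβ0pos t ht).le (hDpos t ht).le) (sq_nonneg _)
      have h3 := mul_le_mul_of_nonneg_right (hcC t ht) (sq_nonneg (β1 t))
      linarith [hβ2pos t ht]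
    exact lt_of_lt_of_le (Real.sqrt_pos.2 (by positivity)) hlb
  obtain ⟨ε, hε, hε1, hε3, hεk⟩ := exists_eps hc1pos hδ3 hkey
  have hb0t0 := hβ0pos t0 le_rfl
  set b0 := β0 t0 with hb0
  have hlamgen : ∀ (S t l : ℝ), t0 ≤ t → β0 t / D t * l ^ 2 ≤ S → 0 ≤ S →
      l ≤ 2 * ωu * S / b0 + 1 := by
    intro S t l ht h hS
    have hDp := hDpos t ht
    have h1 : β0 t * l ^ 2 ≤ S * D t := by
      rw [div_mul_eq_mul_div, div_le_iff₀ hDp] at h; exact h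
    have h2 : S * D t ≤ S * (2 * ωu) := mul_le_mul_of_nonneg_left (hDle t ht) hS
    have h3 : b0 * l ^ 2 ≤ β0 t * l ^ 2 := mul_le_mul_of_nonneg_right (hb0le t ht) (sq_nonneg _)
    have h4 : l ^ 2 ≤ 2 * ωu * S / b0 := by rw [le_div_iff₀ hb0t0]; linarith
    nlinarith [sq_nonneg (l - 1)]
  obtain ⟨L1, hL10, hL1⟩ : ∃ L, 0 ≤ L ∧ ∀ t, t0 ≤ t → lam1 t ≤ L := by
    refine ⟨2 * ωu * (C * β1 t0 ^ 2) / b0 + 1, by positivity, fun t ht => ?_⟩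
    apply hlamgen _ t _ ht _ (by positivity)
    have h1 := hcb1 t ht
    have h2 : c t * β1 t ^ 2 ≤ C * β1 t0 ^ 2 := by
      have := hβ1pos t ht
      have := hb1le t ht
      exact mul_le_mul (hcC t ht) (by gcongr) (sq_nonneg _) hCpos.le
    linarith [hβ2pos t ht]
  obtain ⟨L2, hL20, hL2⟩ : ∃ L, 0 ≤ L ∧ ∀ t, t0 ≤ t → lam2 t ≤ L := by
    refine ⟨2 * ωu * (C * β2 t0 ^ 2) / b0 + 1, by positivity, fun t ht => ?_⟩
    apply hlamgen _ t _ ht _ (by positivity)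
    have h1 := hB0 t ht
    have h2 : c t * β2 t ^ 2 ≤ C * β2 t0 ^ 2 := by
      have := hβ2pos t ht
      have := hb2le t ht
      exact mul_le_mul (hcC t ht) (by gcongr) (sq_nonneg _) hCpos.le
    have h3 : (2 * ωu - D t) / β0 t * (β2 t ^ 2 - 2 * β1 t)
        = c t * β2 t ^ 2 - 2 * (c t * β1 t) := by simp only [hc]; ring
    have h4 := mul_pos (hcpos t ht) (hβ1pos t ht)
    linarith
  have hb0up : ∀ t, t0 ≤ t → β0 t ≤ 2 * ωu / δ6 := by
    intro t ht
    have h := hC0 t ht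
    rw [le_div_iff₀ (hβ0pos t ht)] at h
    rw [le_div_iff₀ hδ6]
    linarith [hDpos t ht]
  set B0 := 2 * ωu / δ6 with hB0def
  have hB00 : 0 < B0 := by positivity
  have hb1t0 := hβ1pos t0 le_rfl
  have hb2t0 := hβ2pos t0 le_rfl
  -- the analysis around a zero
  have key : ∀ xs : H, U xs = 0 → (∃ M, ∀ t, t0 + 1 ≤ t → ‖x t - xs‖ ≤ M) ∧
      Tendsto (fun t => ‖v t‖) atTop (𝓝 0) ∧ Tendsto (fun t => ‖w t‖) atTop (𝓝 0) ∧
      Tendsto (fun t => ‖U (x t)‖) atTop (𝓝 0) := by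
    intro xs hxs
    have up : ∀ {t}, t0 + 1 ≤ t → t0 ≤ t := fun h => by linarith
    have upl : ∀ {t}, t0 + 1 ≤ t → t0 < t := fun h => by linarith
    obtain ⟨E, E', B, M, hE, hE', hEB, hM⟩ := energy (t1 := t0 + 1) (X := fun t => x t - xs)
      (v := v) (w := w) (z := z) (b2 := β2) (b2d := deriv β2) (b2dd := deriv (deriv β2))
      (b1 := β1) (b1d := deriv β1) (a2 := fun t => c t * β1 t) (a2d := a2d) (a2dd := a2dd)
      (a1 := a1) (a1d := a1d) (e1 := fun t => c t * β2 t) (e1d := e1d)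
      (δ1 := δ1) (δ2 := δ2) (δ3 := δ3) (δ4 := δ4) (δ5 := δ5) (δ6 := δ6) (c1 := c1)
      (B2 := β2 t0) (ε := ε)
      (fun t ht => (dx t (upl ht)).sub_const xs) (fun t ht => dv t (upl ht))
      (fun t ht => dw t (upl ht))
      (fun t ht => ⟨(hβ2d t (up ht)).1.hasDerivAt, (hβ2d t (up ht)).2.hasDerivAt,
        (hβ2pos t (up ht)).le, hβ2sign t (up ht)⟩)
      (fun t ht => ⟨(hβ1d t (up ht)).1.hasDerivAt, (hβ1sign t (up ht)).1⟩)
      (fun t ht => ha2 t (up ht))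
      (fun t ht => ha1' t (up ht))
      (fun t ht => ⟨(he1 t (up ht)).1, (he1 t (up ht)).2.2.2.1⟩)
      (by
        intro t ht
        have ht0' := up ht
        have hq := hquasi (φ t) xs hxs
        have hq' : ωu * ‖U (φ t)‖ ^ 2 ≤
            ⟪U (φ t), (x t - xs) + lam1 t • v t + lam2 t • w t⟫_ℝ := by
          have : φ t - xs = (x t - xs) + lam1 t • v t + lam2 t • w t := by
            simp only [hφ]; abel
          rwa [this] at hq
        have hcore := core_ineq (hβ0pos t ht0') (hDpos t ht0') (hzeq t) hq'
        have f0 := hcb1 t ht0'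
        have f1 := hB0 t ht0'
        have f2 := hC0 t ht0'
        have ec : (2 * ωu - D t) / β0 t = c t := by simp only [hc]; ring
        have ea : a1 t = c t * (β1 t * β2 t) - β0 t / D t * (lam1 t * lam2 t) - 3 := by
          simp only [ha1def, hc]; ring
        rw [ec] at hcore f1 f2
        rw [ea]
        have g0 := mul_le_mul_of_nonneg_right f0 (sq_nonneg ‖v t‖)
        have g1 := mul_le_mul_of_nonneg_right f1 (sq_nonneg ‖w t‖)
        have g2 := mul_le_mul_of_nonneg_right f2 (sq_nonneg ‖z t‖)
        linarith)
      hδ1 hδ2 hδ6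
      (fun t ht => hc1.1 ⟨t, up ht, rfl⟩)
      (fun t ht => by
        have h := hA1 t (up ht)
        have ea : a1 t = (2 * ωu - D t) * β1 t * β2 t / β0 t
          - β0 t / D t * (lam1 t * lam2 t) - 3 := by
          simp only [ha1def]; ring
        rw [ea]; exact h)
      (fun t ht => by
        have h := hA2 t (up ht)
        have ea : c t * β1 t = (2 * ωu - D t) * β1 t / β0 t := by simp only [hc]; ring
        rw [ea]; exact h)
      (fun t ht => by
        have h := hB1 t (up ht)
        have ea : c t * β2 t = (2 * ωu - D t) * β2 t / β0 t := by simp only [hc]; ring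
        rw [ea]; exact h)
      (fun t ht => hβ2pos t (up ht)) (fun t ht => hb2le t (up ht)) hε hε1 hε3 hεk
    have hM0 : 0 ≤ M := (norm_nonneg _).trans (hM (t0 + 1) le_rfl).1
    -- norms of the third derivative
    have hU : ∀ t, t0 + 1 ≤ t → ‖U (φ t)‖ ≤ Lu * (M + L1 * M + L2 * M) := by
      intro t ht
      obtain ⟨m1, m2, m3⟩ := hM t ht
      have h1 := hLip (φ t) xs
      rw [hxs, sub_zero] at h1
      have h2 : ‖φ t - xs‖ ≤ M + L1 * M + L2 * M := by
        have : φ t - xs = (x t - xs) + lam1 t • v t + lam2 t • w t := by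
          simp only [hφ]; abel
        rw [this]
        refine (norm_add₃_le).trans ?_
        rw [norm_smul, norm_smul, Real.norm_of_nonneg (hlam1nn t (up ht)),
          Real.norm_of_nonneg (hlam2nn t (up ht))]
        have k1 := mul_le_mul (hL1 t (up ht)) m2 (norm_nonneg _) hL10
        have k2 := mul_le_mul (hL2 t (up ht)) m3 (norm_nonneg _) hL20
        linarith
      exact h1.trans (mul_le_mul_of_nonneg_left h2 hLu.le)
    have hzb : ∀ t, t0 + 1 ≤ t → ‖z t‖ ≤ β2 t0 * M + β1 t0 * M + B0 * (Lu * (M + L1 * M + L2 * M)) := by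
      intro t ht
      obtain ⟨m1, m2, m3⟩ := hM t ht
      simp only [hzdef, norm_neg]
      refine (norm_add₃_le).trans ?_
      rw [norm_smul, norm_smul, norm_smul, Real.norm_of_nonneg (hβ2pos t (up ht)).le,
        Real.norm_of_nonneg (hβ1pos t (up ht)).le, Real.norm_of_nonneg (hβ0pos t (up ht)).le]
      have k1 := mul_le_mul (hb2le t (up ht)) m3 (norm_nonneg _) hb2t0.le
      have k2 := mul_le_mul (hb1le t (up ht)) m2 (norm_nonneg _) hb1t0.le
      have k3 := mul_le_mul (hb0up t (up ht)) (hU t ht) (norm_nonneg _) hB00.le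
      linarith
    have lip : ∀ (f f' : ℝ → H) (K : ℝ), (∀ t, t0 + 1 ≤ t → HasDerivAt f (f' t) t) →
        (∀ t, t0 + 1 ≤ t → ‖f' t‖ ≤ K) →
        ∀ s t, t0 + 1 ≤ s → t0 + 1 ≤ t → ‖f s - f t‖ ≤ K * |s - t| := by
      intro f f' K hf hK s t hs ht
      have := (convex_Ici (t0 + 1)).norm_image_sub_le_of_norm_hasDerivWithin_le
        (fun r hr => (hf r hr).hasDerivWithinAt) (fun r hr => hK r hr) ht hs
      simpa [Real.norm_eq_abs] using this
    have lipx := lip x v M (fun t ht => dx t (upl ht)) (fun t ht => (hM t ht).2.1)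
    have lipv := lip v w M (fun t ht => dv t (upl ht)) (fun t ht => (hM t ht).2.2)
    have lipw := lip w z _ (fun t ht => dw t (upl ht)) hzb
    refine ⟨⟨M, fun t ht => (hM t ht).1⟩, ?_, ?_, ?_⟩
    · refine barbalat (t1 := t0 + 1) hδ1 (fun t => norm_nonneg _) (fun s t hs ht =>
        (abs_norm_sub_norm_le _ _).trans (lipv s t hs ht)) hE (fun t ht => ?_) hEB
      have h1 := hE' t ht
      have h2 : 0 ≤ δ2 * ‖w t‖ ^ 2 := by positivity
      have h3 : 0 ≤ δ6 * ‖z t‖ ^ 2 := by positivity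
      linarith
    · refine barbalat (t1 := t0 + 1) hδ2 (fun t => norm_nonneg _) (fun s t hs ht =>
        (abs_norm_sub_norm_le _ _).trans (lipw s t hs ht)) hE (fun t ht => ?_) hEB
      have h1 := hE' t ht
      have h2 : 0 ≤ δ1 * ‖v t‖ ^ 2 := by positivity
      have h3 : 0 ≤ δ6 * ‖z t‖ ^ 2 := by positivity
      linarith
    · -- constants
      set P := β1 t0 / b0 + Lu * L1 with hP
      set Q := β2 t0 / b0 + Lu * L2 with hQ
      set K := P + Q + 1 / b0 with hK
      have hP0 : 0 < P := by positivity
      have hQ0 : 0 < Q := by positivity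
      have hbi : 0 < 1 / b0 := by positivity
      have hK0 : 0 < K := by positivity
      set m := min δ1 (min δ2 δ6) with hm
      have hm0 : 0 < m := lt_min hδ1 (lt_min hδ2 hδ6)
      refine barbalat (t1 := t0 + 1) (K := Lu * M) (κ := m / (3 * K ^ 2)) (by positivity)
        (fun t => norm_nonneg _) (fun s t hs ht => ?_) hE (fun t ht => ?_) hEB
      · refine (abs_norm_sub_norm_le _ _).trans ((hLip _ _).trans ?_)
        rw [mul_assoc]
        exact mul_le_mul_of_nonneg_left (lipx s t hs ht) hLu.le
      · have h1 := hE' t ht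
        have m1 : m ≤ δ1 := min_le_left _ _
        have m2 : m ≤ δ2 := (min_le_right _ _).trans (min_le_left _ _)
        have m6 : m ≤ δ6 := (min_le_right _ _).trans (min_le_right _ _)
        have n1 := mul_le_mul_of_nonneg_right m1 (sq_nonneg ‖v t‖)
        have n2 := mul_le_mul_of_nonneg_right m2 (sq_nonneg ‖w t‖)
        have n6 := mul_le_mul_of_nonneg_right m6 (sq_nonneg ‖z t‖)
        have u1 : b0 * ‖U (φ t)‖ ≤ ‖z t‖ + β2 t0 * ‖w t‖ + β1 t0 * ‖v t‖ := by
          have hu : β0 t • U (φ t) = -(z t + β2 t • w t + β1 t • v t) := by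
            rw [eq_neg_iff_add_eq_zero, add_comm]; exact hzeq t
          have hn := congrArg norm hu
          rw [norm_smul, norm_neg, Real.norm_of_nonneg (hβ0pos t (up ht)).le] at hn
          have hn2 : ‖z t + β2 t • w t + β1 t • v t‖ ≤ ‖z t‖ + ‖β2 t • w t‖ + ‖β1 t • v t‖ :=
            norm_add₃_le
          rw [norm_smul, norm_smul, Real.norm_of_nonneg (hβ2pos t (up ht)).le,
            Real.norm_of_nonneg (hβ1pos t (up ht)).le] at hn2
          have k1 := mul_le_mul_of_nonneg_right (hb2le t (up ht)) (norm_nonneg (w t))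
          have k2 := mul_le_mul_of_nonneg_right (hb1le t (up ht)) (norm_nonneg (v t))
          have k3 := mul_le_mul_of_nonneg_right (hb0le t (up ht)) (norm_nonneg (U (φ t)))
          linarith
        have u2 : ‖U (φ t)‖ ≤ 1 / b0 * ‖z t‖ + β2 t0 / b0 * ‖w t‖ + β1 t0 / b0 * ‖v t‖ := by
          have : 1 / b0 * ‖z t‖ + β2 t0 / b0 * ‖w t‖ + β1 t0 / b0 * ‖v t‖
            = (‖z t‖ + β2 t0 * ‖w t‖ + β1 t0 * ‖v t‖) / b0 := by ring
          rw [this, le_div_iff₀ hb0t0]; linarith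
        have u3 : ‖U (x t)‖ ≤ ‖U (φ t)‖ + Lu * (L1 * ‖v t‖ + L2 * ‖w t‖) := by
          have h2 := hLip (x t) (φ t)
          have h3 : ‖x t - φ t‖ ≤ L1 * ‖v t‖ + L2 * ‖w t‖ := by
            have : x t - φ t = -(lam1 t • v t + lam2 t • w t) := by simp only [hφ]; abel
            rw [this, norm_neg]
            refine (norm_add_le _ _).trans ?_
            rw [norm_smul, norm_smul, Real.norm_of_nonneg (hlam1nn t (up ht)),
              Real.norm_of_nonneg (hlam2nn t (up ht))]
            have k1 := mul_le_mul_of_nonneg_right (hL1 t (up ht)) (norm_nonneg (v t))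
            have k2 := mul_le_mul_of_nonneg_right (hL2 t (up ht)) (norm_nonneg (w t))
            linarith
          have h4 := mul_le_mul_of_nonneg_left h3 hLu.le
          have h5 := norm_le_norm_add_norm_sub' (U (x t)) (U (φ t))
          linarith
        have u4 : ‖U (x t)‖ ≤ K * (‖v t‖ + ‖w t‖ + ‖z t‖) := by
          have a1 : P * ‖v t‖ ≤ K * ‖v t‖ := mul_le_mul_of_nonneg_right (by linarith) (norm_nonneg _)
          have a2 : Q * ‖w t‖ ≤ K * ‖w t‖ := mul_le_mul_of_nonneg_right (by linarith) (norm_nonneg _)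
          have a3 : 1 / b0 * ‖z t‖ ≤ K * ‖z t‖ :=
            mul_le_mul_of_nonneg_right (by linarith) (norm_nonneg _)
          have a4 : P * ‖v t‖ = β1 t0 / b0 * ‖v t‖ + Lu * (L1 * ‖v t‖) := by rw [hP]; ring
          have a5 : Q * ‖w t‖ = β2 t0 / b0 * ‖w t‖ + Lu * (L2 * ‖w t‖) := by rw [hQ]; ring
          linarith
        have u5 : ‖U (x t)‖ ^ 2 ≤ 3 * K ^ 2 * (‖v t‖ ^ 2 + ‖w t‖ ^ 2 + ‖z t‖ ^ 2) := by
          have a1 : ‖U (x t)‖ ^ 2 ≤ (K * (‖v t‖ + ‖w t‖ + ‖z t‖)) ^ 2 := by gcongr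
          have a2 : (‖v t‖ + ‖w t‖ + ‖z t‖) ^ 2 ≤ 3 * (‖v t‖ ^ 2 + ‖w t‖ ^ 2 + ‖z t‖ ^ 2) := by
            nlinarith [sq_nonneg (‖v t‖ - ‖w t‖), sq_nonneg (‖v t‖ - ‖z t‖),
              sq_nonneg (‖w t‖ - ‖z t‖)]
          have a3 := mul_le_mul_of_nonneg_left a2 (sq_nonneg K)
          rw [mul_pow] at a1
          linarith
        have u6 : m / (3 * K ^ 2) * ‖U (x t)‖ ^ 2 ≤ m * (‖v t‖ ^ 2 + ‖w t‖ ^ 2 + ‖z t‖ ^ 2) := by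
          rw [div_mul_eq_mul_div, div_le_iff₀ (by positivity)]
          have := mul_le_mul_of_nonneg_left u5 hm0.le
          linarith
        linarith
  refine ⟨fun xs hxs => ?_, ?_⟩
  · obtain ⟨⟨M, hM⟩, hv0, hw0, -⟩ := key xs hxs
    have hy1 : ∀ t, t0 < t → HasDerivAt (fun t => ‖x t - xs‖ ^ 2) (2 * ⟪x t - xs, v t⟫_ℝ) t :=
      fun t ht => ((dx t ht).sub_const xs).norm_sq
    have hy2 : ∀ t, t0 < t → HasDerivAt (deriv (fun t => ‖x t - xs‖ ^ 2))
        (2 * (⟪x t - xs, w t⟫_ℝ + ⟪v t, v t⟫_ℝ)) t := by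
      intro t ht
      have h := (((dx t ht).sub_const xs).inner ℝ (dv t ht)).const_mul 2
      refine h.congr_of_eventuallyEq ?_
      filter_upwards [Ioi_mem_nhds ht] with s hs
      exact (hy1 s hs).deriv
    have hin : ∀ f : ℝ → H, Tendsto (fun t => ‖f t‖) atTop (𝓝 0) →
        Tendsto (fun t => ⟪x t - xs, f t⟫_ℝ) atTop (𝓝 0) := by
      intro f hf
      have h1 : Tendsto (fun t => M * ‖f t‖) atTop (𝓝 0) := by simpa using hf.const_mul M
      refine squeeze_zero_norm' ?_ h1
      filter_upwards [eventually_ge_atTop (t0 + 1)] with t ht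
      exact (norm_inner_le_norm _ _).trans
        (mul_le_mul_of_nonneg_right (hM t ht) (norm_nonneg _))
    constructor
    · have h1 : Tendsto (fun t => 2 * ⟪x t - xs, v t⟫_ℝ) atTop (𝓝 0) := by
        simpa using (hin v hv0).const_mul 2
      refine h1.congr' ?_
      filter_upwards [eventually_gt_atTop t0] with t ht
      exact (hy1 t ht).deriv.symm
    · have h1 : Tendsto (fun t => 2 * (⟪x t - xs, w t⟫_ℝ + ⟪v t, v t⟫_ℝ)) atTop (𝓝 0) := by
        have h2 : Tendsto (fun t => ⟪v t, v t⟫_ℝ) atTop (𝓝 0) := by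
          simp only [real_inner_self_eq_norm_sq]
          simpa using hv0.pow 2
        simpa using ((hin w hw0).add h2).const_mul 2
      refine h1.congr' ?_
      filter_upwards [eventually_gt_atTop t0] with t ht
      exact (hy2 t ht).deriv.symm
  · obtain ⟨xs, hxs⟩ := hZ
    exact (key xs hxs).2.2.2
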